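/- For every n ≥ 1, the path P_n on n vertices satisfies ρ(P_n) ≤ 1 + n(n−1)/2 − 3·⌊n/7⌋. -/

import Mathlib

/-- `ArrowsR G H` (written `G →r H`) means: every proper vertex coloring of `G`
contains a rainbow induced subgraph isomorphic to `H`, i.e. an induced copy of `H`
(a graph embedding) whose vertices receive pairwise distinct colors. -/
def ArrowsR {α β : Type} (G : SimpleGraph α) (H : SimpleGraph β) : Prop :=
  ∀ c : α → ℕ, (∀ u v : α, G.Adj u v → c u ≠ c v) →
    ∃ f : H ↪g G, Function.Injective fun h => c (f h)

/-- `rho H` is the minimum number of vertices of a graph `G` with `G →r H`. -/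
noncomputable def rho {β : Type} (H : SimpleGraph β) : ℕ :=
  sInf {m : ℕ | ∃ G : SimpleGraph (Fin m), ArrowsR G H}

open Finset

/-- A weight `w` on the path `0, …, n - 1` is a Hall weight if every nonempty vertex set `S`
contains a vertex or an edge of total weight at least `|S|`. -/
def IsHallWeight (w : ℕ → ℕ) (n : ℕ) : Prop :=
  ∀ S ∈ (range n).powerset, S.Nonempty →
    ∃ i ∈ S, #S ≤ w i ∨ (i + 1 ∈ S ∧ #S ≤ w i + w (i + 1))

/-- The path `0, …, n - 1` with each vertex `i` blown up to a clique of size `w i`. -/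
def pathBlowup (w : ℕ → ℕ) (n : ℕ) : SimpleGraph (Σ i : Fin n, Fin (w i)) where
  Adj x y := x ≠ y ∧ (x.1 = y.1 ∨ (SimpleGraph.pathGraph n).Adj x.1 y.1)
  symm := ⟨fun _ _ h => ⟨h.1.symm, h.2.imp Eq.symm SimpleGraph.Adj.symm⟩⟩
  loopless := ⟨fun _ h => h.1 rfl⟩

theorem arrowsR_pathBlowup {w : ℕ → ℕ} {n : ℕ} (hw : IsHallWeight w n) :
    ArrowsR (pathBlowup w n) (SimpleGraph.pathGraph n) := by
  intro c hc
  let t : Fin n → Finset ℕ := fun i => univ.image fun a : Fin (w i) => c ⟨i, a⟩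
  have ht : ∀ i, #(t i) = w i := by
    intro i
    have hinj : Function.Injective fun a : Fin (w i) => c ⟨i, a⟩ := by
      intro a b hab
      by_contra hne
      exact hc ⟨i, a⟩ ⟨i, b⟩ ⟨by simpa using hne, Or.inl rfl⟩ hab
    simp [t, card_image_of_injective _ hinj]
  have hdisj : ∀ i j, (SimpleGraph.pathGraph n).Adj i j → Disjoint (t i) (t j) := by
    intro i j hij
    rw [Finset.disjoint_left]
    intro x hi hj
    simp only [t, mem_image, mem_univ, true_and] at hi hj
    obtain ⟨a, rfl⟩ := hi
    obtain ⟨b, hb⟩ := hj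
    refine hc ⟨i, a⟩ ⟨j, b⟩ ⟨?_, Or.inr hij⟩ hb.symm
    intro h
    exact hij.ne (congrArg Sigma.fst h)
  have hall : ∀ S : Finset (Fin n), #S ≤ #(S.biUnion t) := by
    intro S
    rcases S.eq_empty_or_nonempty with rfl | hS
    · simp
    obtain ⟨i, hi, h⟩ := hw (S.map Fin.valEmbedding)
      (by
        rw [mem_powerset]
        intro x hx
        obtain ⟨y, -, rfl⟩ := mem_map.1 hx
        simp) (hS.map)
    rw [card_map] at h
    obtain ⟨i, hiS, rfl⟩ := mem_map.1 hi
    rcases h with h | ⟨hj, h⟩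
    · exact h.trans ((ht i).symm.le.trans (card_le_card (subset_biUnion_of_mem t hiS)))
    · obtain ⟨j, hjS, hji⟩ := mem_map.1 hj
      simp only [Fin.valEmbedding_apply] at hji h
      have hadj : (SimpleGraph.pathGraph n).Adj i j :=
        SimpleGraph.pathGraph_adj.2 (Or.inl hji.symm)
      rw [← hji, ← ht, ← ht, ← card_union_of_disjoint (hdisj i j hadj)] at h
      exact h.trans (card_le_card
        (union_subset (subset_biUnion_of_mem t hiS) (subset_biUnion_of_mem t hjS)))
  obtain ⟨f, hf, hft⟩ := (all_card_le_biUnion_card_iff_exists_injective t).1 hall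
  have hrep : ∀ i : Fin n, ∃ a : Fin (w i), c ⟨i, a⟩ = f i := by
    intro i
    simpa [t] using hft i
  choose a ha using hrep
  refine ⟨⟨⟨fun i => ⟨i, a i⟩, fun i j h => congrArg Sigma.fst h⟩, ?_⟩, ?_⟩
  · intro i j
    constructor
    · rintro ⟨hne, h | h⟩
      · have h' : i = j := h
        subst h'
        exact absurd rfl hne
      · exact h
    · intro h
      exact ⟨fun h' => h.ne (congrArg Sigma.fst h'), Or.inr h⟩
  · intro i j h
    apply hf
    rw [← ha i, ← ha j]
    exact h

theorem ArrowsR.of_iso {α α' β : Type} {G : SimpleGraph α} {G' : SimpleGraph α'}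
    {H : SimpleGraph β} (h : ArrowsR G H) (e : G ≃g G') : ArrowsR G' H := by
  intro c hc
  obtain ⟨f, hf⟩ := h (fun v => c (e v)) fun u v huv => hc _ _ (e.map_adj_iff.2 huv)
  exact ⟨f.trans e.toEmbedding, hf⟩

theorem ArrowsR.rho_le {α β : Type} [Fintype α] {G : SimpleGraph α} {H : SimpleGraph β}
    (h : ArrowsR G H) : rho H ≤ Fintype.card α :=
  Nat.sInf_le ⟨_, h.of_iso (G.overFinIso rfl)⟩

theorem IsHallWeight.rho_le {w : ℕ → ℕ} {n : ℕ} (hw : IsHallWeight w n) :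
    rho (SimpleGraph.pathGraph n) ≤ ∑ i ∈ range n, w i := by
  have h := (arrowsR_pathBlowup hw).rho_le
  rw [← Fin.sum_univ_eq_sum_range]
  simpa using h

/-- A Hall weight extends along an appended path of length `m` if the increments `u` handle all
independent sets of the appended part, and all appended edges are heavy enough. -/
theorem IsHallWeight.append {w u : ℕ → ℕ} {n m : ℕ} (hw : IsHallWeight w n) (hm : m ≤ n)
    (hu : ∀ T ∈ (range m).powerset, T.Nonempty → ∃ i ∈ T, #T ≤ u i ∨ i + 1 ∈ T) :
    IsHallWeight (fun i => if i < n then w i else n + u (i - n)) (n + m) := by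
  intro S hS hne
  rw [mem_powerset] at hS
  by_cases hSn : S ⊆ range n
  · obtain ⟨i, hi, h⟩ := hw S (mem_powerset.2 hSn) hne
    have hin := mem_range.1 (hSn hi)
    refine ⟨i, hi, h.imp (fun h => by simpa [hin] using h) fun h => ⟨h.1, ?_⟩⟩
    have hin' := mem_range.1 (hSn h.1)
    simpa [hin, hin'] using h.2
  · have hmem : ∀ {i}, i ∈ (range m).filter (fun i => n + i ∈ S) ↔ n + i ∈ S := by
      intro i
      rw [mem_filter, and_iff_right_iff_imp]
      intro hi
      have := mem_range.1 (hS hi)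
      simp; omega
    have hcard : #S ≤ n + #((range m).filter fun i => n + i ∈ S) := by
      have hsub : S ⊆ range n ∪ ((range m).filter fun i => n + i ∈ S).image (n + ·) := by
        intro x hx
        rcases lt_or_ge x n with h | h
        · simp [h]
        · obtain ⟨k, rfl⟩ := Nat.exists_eq_add_of_le h
          exact mem_union_right _ (mem_image_of_mem _ (hmem.2 hx))
      have h := (card_le_card hsub).trans (card_union_le _ _)
      rw [card_range] at h
      exact h.trans (Nat.add_le_add_left card_image_le n)
    have hcard' : #S ≤ n + m := by simpa using card_le_card hS
    obtain ⟨x, hx, hxn⟩ := not_subset.1 hSn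
    obtain ⟨k, rfl⟩ := Nat.exists_eq_add_of_le (not_lt.1 (mt mem_range.2 hxn))
    obtain ⟨i, hi, h⟩ := hu _ (mem_powerset.2 (filter_subset _ _)) ⟨k, hmem.2 hx⟩
    refine ⟨n + i, hmem.1 hi, h.imp (fun h => ?_) fun h => ⟨?_, ?_⟩⟩
    · simp; omega
    · rw [add_assoc]; exact hmem.1 h
    · simp [add_assoc]; omega

/-- Appending one vertex of weight `n`. -/
theorem IsHallWeight.succ {w : ℕ → ℕ} {n : ℕ} (hw : IsHallWeight w n) (hn : 1 ≤ n) :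
    IsHallWeight (fun i => if i < n then w i else n) (n + 1) := by
  intro S hS hne
  rw [mem_powerset] at hS
  have hcard : #S ≤ n + 1 := by simpa using card_le_card hS
  by_cases hSn : n ∈ S
  · rcases hcard.lt_or_eq with h | h
    · exact ⟨n, hSn, Or.inl (by simp; omega)⟩
    · have hSeq : S = range (n + 1) := eq_of_subset_of_card_le hS (by simp [h])
      obtain ⟨i, hi, hwi⟩ := hw {n - 1} (by simp; omega) (by simp)
      obtain rfl := mem_singleton.1 hi
      have h1 : 1 ≤ w (n - 1) := by
        rcases hwi with h | ⟨h, -⟩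
        · simpa using h
        · simp at h
      refine ⟨n - 1, by simp [hSeq], Or.inr ⟨by simpa [Nat.sub_add_cancel hn], ?_⟩⟩
      simp only [Nat.sub_add_cancel hn, if_pos (show n - 1 < n by omega), lt_irrefl,
        if_false]
      omega
  · have hsub : S ⊆ range n := by
      intro x hx
      have := mem_range.1 (hS hx)
      have : x ≠ n := fun h => hSn (h ▸ hx)
      simp; omega
    obtain ⟨i, hi, h⟩ := hw S (mem_powerset.2 hsub) hne
    have hin := mem_range.1 (hsub hi)
    refine ⟨i, hi, h.imp (fun h => by simpa [hin] using h) fun h => ⟨h.1, ?_⟩⟩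
    have hin' := mem_range.1 (hsub h.1)
    simpa [hin, hin'] using h.2

theorem exists_isHallWeight_add_seven {w : ℕ → ℕ} {n : ℕ} (hw : IsHallWeight w n)
    (hn : 7 ≤ n) :
    ∃ w', IsHallWeight w' (n + 7) ∧
      ∑ i ∈ range (n + 7), w' i = ∑ i ∈ range n, w i + 7 * n + 16 := by
  refine ⟨_, hw.append (u := fun i => [1, 1, 2, 2, 3, 3, 4].getD i 0) hn (by decide +kernel), ?_⟩
  rw [sum_range_add, sum_congr rfl fun i hi => if_pos (mem_range.1 hi)]
  simp [sum_range_succ]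
  ring

theorem exists_isHallWeight_succ {w : ℕ → ℕ} {n : ℕ} (hw : IsHallWeight w n) (hn : 1 ≤ n) :
    ∃ w', IsHallWeight w' (n + 1) ∧
      ∑ i ∈ range (n + 1), w' i = ∑ i ∈ range n, w i + n := by
  refine ⟨_, hw.succ hn, ?_⟩
  rw [sum_range_succ, sum_congr rfl fun i hi => if_pos (mem_range.1 hi)]
  simp

theorem isHallWeight_seven : IsHallWeight (fun i => [1, 2, 3, 4, 2, 2, 4].getD i 0) 7 := by
  unfold IsHallWeight
  decide +kernel

theorem exists_isHallWeight_add {w : ℕ → ℕ} {n : ℕ} (hw : IsHallWeight w n) (hn : 1 ≤ n)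
    (k : ℕ) :
    ∃ w', IsHallWeight w' (n + k) ∧
      ∑ i ∈ range (n + k), w' i = ∑ i ∈ range n, w i + ∑ j ∈ range k, (n + j) := by
  induction k with
  | zero => exact ⟨w, hw, by simp⟩
  | succ k ih =>
    obtain ⟨w₁, h₁, hs₁⟩ := ih
    obtain ⟨w₂, h₂, hs₂⟩ := exists_isHallWeight_succ h₁ (by omega)
    exact ⟨w₂, h₂, by rw [← add_assoc, hs₂, hs₁, sum_range_succ]; ring⟩

theorem exists_isHallWeight_sum_le (n : ℕ) (hn : 1 ≤ n) :
    ∃ w, IsHallWeight w n ∧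
      ∑ i ∈ range n, w i ≤ 1 + n * (n - 1) / 2 - 3 * (n / 7) := by
  induction n using Nat.strong_induction_on with
  | _ n ih =>
  rcases lt_or_ge n 7 with h | h
  · have h₁ : IsHallWeight (fun _ => 1) 1 := by
      unfold IsHallWeight
      decide +kernel
    obtain ⟨w, hw, hs⟩ := exists_isHallWeight_add h₁ le_rfl (n - 1)
    rw [Nat.add_sub_cancel' hn] at hw hs
    refine ⟨w, hw, hs.le.trans ?_⟩
    interval_cases n <;> decide
  rcases lt_or_ge n 14 with h' | h'
  · obtain ⟨w, hw, hs⟩ := exists_isHallWeight_add isHallWeight_seven (by norm_num) (n - 7)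
    rw [Nat.add_sub_cancel' h] at hw hs
    refine ⟨w, hw, hs.le.trans ?_⟩
    interval_cases n <;> decide
  · obtain ⟨m, rfl⟩ := Nat.exists_eq_add_of_le' h
    obtain ⟨w, hw, hs⟩ := ih m (by omega) (by omega)
    obtain ⟨w', hw', hs'⟩ := exists_isHallWeight_add_seven hw (by omega)
    refine ⟨w', hw', ?_⟩
    have hmul : (m + 7) * (m + 7 - 1) / 2 = m * (m - 1) / 2 + 7 * m + 21 := by
      obtain ⟨k, rfl⟩ := Nat.exists_eq_add_of_le' (show 1 ≤ m by omega)
      have : (k + 1 + 7) * (k + 1 + 7 - 1) = (k + 1) * (k + 1 - 1) + 2 * (7 * (k + 1) + 21) := by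
        simp only [Nat.add_sub_cancel, show k + 1 + 7 - 1 = k + 7 by omega]
        ring
      omega
    have hpos : 3 * (m / 7) ≤ m * (m - 1) / 2 := by
      have : m * 6 ≤ m * (m - 1) := Nat.mul_le_mul_left _ (by omega)
      omega
    omega

/-- `ρ(P_n) ≤ 1 + n(n−1)/2 − 3⌊n/7⌋` for every `n ≥ 1`. -/
theorem stmt17 (n : ℕ) (hn : 1 ≤ n) :
    rho (SimpleGraph.pathGraph n) ≤ 1 + n * (n - 1) / 2 - 3 * (n / 7) := by
  obtain ⟨w, hw, hs⟩ := exists_isHallWeight_sum_le n hn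
  exact hw.rho_le.trans hs
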